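/- arXiv:1610.08116 — 3 statements merged into one kernel-verified Lean document; each statement's English description precedes it below -/
import Mathlib

section
/- Substitution lemma: Let 𝒜 = x̄:T̄ and suppose the closed values v̄ satisfy 𝒪𝒮;∅ ⊢ v̄ : T̄. If 𝒟;𝒜 ⊢ e : T, then 𝒟;∅ ⊢ e[x̄:=v̄] : T. -/
namespace HFC

/-- Expressions of the higher-order field calculus (HFC). -/
inductive Expr : Type where
  | var : String → Expr
  | fld : (ℕ → Option Expr) → Expr
  | cnst : String → List Expr → Expr
  | builtin : String → Expr
  | dfun : String → Expr
  | lam : List String → Expr → Expr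
  | app : Expr → List Expr → Expr
  | rep : Expr → String → Expr → Expr
  | nbr : Expr → Expr

/-- Free occurrence of a variable in an expression. -/
inductive FreeIn (x : String) : Expr → Prop where
  | var : FreeIn x (.var x)
  | fld {φ : ℕ → Option Expr} {δ : ℕ} {e : Expr} :
      φ δ = some e → FreeIn x e → FreeIn x (.fld φ)
  | cnst {c es e} : e ∈ es → FreeIn x e → FreeIn x (.cnst c es)
  | lam {xs e} : x ∉ xs → FreeIn x e → FreeIn x (.lam xs e)
  | appFun {e es} : FreeIn x e → FreeIn x (.app e es)
  | appArg {e es e'} : e' ∈ es → FreeIn x e' → FreeIn x (.app e es)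
  | repInit {e₁ y e₂} : FreeIn x e₁ → FreeIn x (.rep e₁ y e₂)
  | repBody {e₁ y e₂} : x ≠ y → FreeIn x e₂ → FreeIn x (.rep e₁ y e₂)
  | nbr {e} : FreeIn x e → FreeIn x (.nbr e)

def Closed (e : Expr) : Prop := ∀ x, ¬ FreeIn x e

/-- Local values: data values and function values. -/
inductive IsLocalVal : Expr → Prop where
  | cnst {c es} : (∀ e ∈ es, IsLocalVal e) → IsLocalVal (.cnst c es)
  | builtin {b} : IsLocalVal (.builtin b)
  | dfun {d} : IsLocalVal (.dfun d)
  | lam {xs e} : Closed (.lam xs e) → IsLocalVal (.lam xs e)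

/-- Values: local values and neighbouring field values. -/
def IsVal (e : Expr) : Prop :=
  IsLocalVal e ∨ ∃ φ, e = Expr.fld φ ∧ ∀ δ ℓ, φ δ = some ℓ → IsLocalVal ℓ

/-- Function values. -/
def IsFunVal (e : Expr) : Prop :=
  (∃ b, e = Expr.builtin b) ∨ (∃ d, e = Expr.dfun d) ∨
  (∃ xs b, e = Expr.lam xs b ∧ Closed e)

/-- Types of HFC. -/
inductive Ty : Type where
  | base : String → Ty
  | fld : Ty → Ty
  | arrow : List Ty → Ty → Ty

/-- Local return types S ::= B | (T̄)→S. -/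
inductive IsLocalRet : Ty → Prop where
  | base {B} : IsLocalRet (.base B)
  | arrow {Ts S} : IsLocalRet S → IsLocalRet (.arrow Ts S)

/-- Field types F ::= field(S). -/
def IsFieldTy (T : Ty) : Prop := ∃ S, T = Ty.fld S ∧ IsLocalRet S

/-- Return types R ::= F | S. -/
def IsReturn (T : Ty) : Prop := IsFieldTy T ∨ IsLocalRet T

/-- Local types L ::= B | (T̄)→R. -/
inductive IsLocal : Ty → Prop where
  | base {B} : IsLocal (.base B)
  | arrow {Ts R} : IsReturn R → IsLocal (.arrow Ts R)

/-- Local-type-scheme environments: each name is mapped to the set of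
instantiations of its local type scheme (or is undefined). -/
abbrev SchemeEnv := String → Option (Set Ty)

/-- Type environments for program variables. -/
abbrev VarEnv := String → Option Ty

def VarEnv.empty : VarEnv := fun _ => none

/-- Extension of a lookup environment by a list of bindings x̄ ↦ w̄. -/
def extendA {W : Type _} (X : String → Option W) (xs : List String) (ws : List W) :
    String → Option W :=
  fun y => ((xs.zip ws).lookup y).orElse (fun _ => X y)

/-- The typing judgement 𝒟;𝒜 ⊢ e : T of HFC (Figure 4). -/
inductive HasTy (D : SchemeEnv) : VarEnv → Expr → Ty → Prop where
  | var {A x T} : A x = some T → HasTy D A (.var x) T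
  | fld {A φ S} : IsLocalRet S →
      (∀ δ ℓ, φ δ = some ℓ → IsLocalVal ℓ) →
      (∀ δ ℓ, φ δ = some ℓ → HasTy D A ℓ S) →
      HasTy D A (.fld φ) (.fld S)
  | cnst {A c es s Ls S} : D c = some s → Ty.arrow Ls S ∈ s →
      (∀ L ∈ Ls, IsLocal L) → IsLocalRet S →
      (∀ e ∈ es, IsLocalVal e) →
      es.length = Ls.length →
      (∀ (i : ℕ) e L, es[i]? = some e → Ls[i]? = some L → HasTy D A e L) →
      HasTy D A (.cnst c es) S
  | builtin {A b s L} : D b = some s → L ∈ s → IsLocal L → HasTy D A (.builtin b) L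
  | dfun {A d s L} : D d = some s → L ∈ s → IsLocal L → HasTy D A (.dfun d) L
  | lam {A xs e Ts R} :
      (∀ y, FreeIn y (.lam xs e) → ∃ L, A y = some L ∧ IsLocal L) →
      IsReturn R → xs.length = Ts.length →
      HasTy D (extendA A xs Ts) e R →
      HasTy D A (.lam xs e) (.arrow Ts R)
  | app {A e es Ts R} : HasTy D A e (.arrow Ts R) →
      es.length = Ts.length →
      (∀ (i : ℕ) e' T', es[i]? = some e' → Ts[i]? = some T' → HasTy D A e' T') →
      HasTy D A (.app e es) R
  | rep {A x e₁ e₂ S} : IsLocalRet S → HasTy D A e₁ S →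
      HasTy D (extendA A [x] [S]) e₂ S →
      HasTy D A (.rep e₁ x e₂) S
  | nbr {A e S} : IsLocalRet S → HasTy D A e S → HasTy D A (.nbr e) (.fld S)

/-- Substitution maps. -/
abbrev SubstMap := String → Option Expr

def maskS (σ : SubstMap) (xs : List String) : SubstMap :=
  fun y => if y ∈ xs then none else σ y

def bindVals (xs : List String) (vs : List Expr) : SubstMap :=
  fun y => (xs.zip vs).lookup y

/-- Capture-avoiding simultaneous substitution (of closed values)
e[x̄:=v̄] as a relation: `Subst σ e e'` means e' = eσ. -/
inductive Subst : SubstMap → Expr → Expr → Prop where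
  | varHit {σ x v} : σ x = some v → Subst σ (.var x) v
  | varMiss {σ x} : σ x = none → Subst σ (.var x) (.var x)
  | fld {σ φ} : Subst σ (.fld φ) (.fld φ)
  | cnst {σ c es es'} : es'.length = es.length →
      (∀ (i : ℕ) a b, es[i]? = some a → es'[i]? = some b → Subst σ a b) →
      Subst σ (.cnst c es) (.cnst c es')
  | builtin {σ b} : Subst σ (.builtin b) (.builtin b)
  | dfun {σ d} : Subst σ (.dfun d) (.dfun d)
  | lam {σ xs e e'} : Subst (maskS σ xs) e e' → Subst σ (.lam xs e) (.lam xs e')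
  | app {σ e e' es es'} : Subst σ e e' → es'.length = es.length →
      (∀ (i : ℕ) a b, es[i]? = some a → es'[i]? = some b → Subst σ a b) →
      Subst σ (.app e es) (.app e' es')
  | rep {σ x e₁ e₁' e₂ e₂'} : Subst σ e₁ e₁' → Subst (maskS σ [x]) e₂ e₂' →
      Subst σ (.rep e₁ x e₂) (.rep e₁' x e₂')
  | nbr {σ e e'} : Subst σ e e' → Subst σ (.nbr e) (.nbr e')

/-!
The induction is on the typing derivation, for a substitution `σ` of closed well-typed expressions,
and it types the result in the environment `A` with the domain of `σ` removed. Free variables of a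
well-typed expression are bound in its environment, so this choice of target records that no
substituted variable survives, which gives the side condition of the rule for anonymous functions.
Substitution never creates free variables, so the arguments of a data constructor remain local
values; and neighbouring field values, which substitution leaves alone, are closed, so they keep
their type in any environment.
-/

section Lists

variable {α β : Type*}

theorem exists_getElem?_eq_some_of_length_eq {as : List α} {bs : List β}
    (hlen : as.length = bs.length) {i : ℕ} {a : α} (ha : as[i]? = some a) :
    ∃ b, bs[i]? = some b := by
  obtain ⟨hi, -⟩ := List.getElem?_eq_some_iff.1 ha
  exact ⟨bs[i]'(hlen ▸ hi), List.getElem?_eq_getElem _⟩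

theorem exists_getElem?_pair_of_mem {as : List α} {bs : List β}
    (hlen : as.length = bs.length) {a : α} (ha : a ∈ as) :
    ∃ (i : ℕ) (b : β), as[i]? = some a ∧ bs[i]? = some b := by
  obtain ⟨i, hi⟩ := List.mem_iff_getElem?.1 ha
  obtain ⟨b, hb⟩ := exists_getElem?_eq_some_of_length_eq hlen hi
  exact ⟨i, b, hi, hb⟩

theorem rel_lookup_zip_of_forall₂ [BEq α] {γ : Type*} {R : β → γ → Prop} {bs : List β} {cs : List γ}
    (h : List.Forall₂ R bs cs) (as : List α) (a : α) :
    Option.Rel R ((as.zip bs).lookup a) ((as.zip cs).lookup a) := by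
  induction h generalizing as with
  | nil => simp
  | cons hbc _ ih =>
    cases as with
    | nil => exact .none
    | cons a' as =>
      simp only [List.zip_cons_cons, List.lookup_cons]
      split
      · exact .some hbc
      · exact ih as

variable [BEq α] [LawfulBEq α]

theorem lookup_zip_eq_none_of_notMem {as : List α} {a : α} (ha : a ∉ as) (bs : List β) :
    (as.zip bs).lookup a = none := by
  rw [List.lookup_eq_none_iff]
  rintro ⟨a', b⟩ hmem
  have hne : a ≠ a' := fun h => ha (h ▸ (List.of_mem_zip hmem).1)
  simpa using hne

theorem exists_lookup_zip_eq_some_of_mem {as : List α} {bs : List β}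
    (hlen : as.length = bs.length) {a : α} (ha : a ∈ as) :
    ∃ b, (as.zip bs).lookup a = some b := by
  rw [← Option.ne_none_iff_exists', Ne, List.lookup_eq_none_iff]
  intro hne
  rw [← List.map_fst_zip hlen.le, List.mem_map] at ha
  obtain ⟨p, hp, rfl⟩ := ha
  simpa using hne p hp

end Lists

section Environments

variable {W : Type*} {xs : List String} {ws : List W} {x : String}

theorem extendA_of_notMem (X : String → Option W) (hx : x ∉ xs) (ws : List W) :
    extendA X xs ws x = X x := by
  simp [extendA, lookup_zip_eq_none_of_notMem hx]

theorem extendA_eq_extendA_of_mem (X Y : String → Option W) (hlen : xs.length = ws.length)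
    (hx : x ∈ xs) : extendA X xs ws x = extendA Y xs ws x := by
  obtain ⟨w, hw⟩ := exists_lookup_zip_eq_some_of_mem hlen hx
  simp [extendA, hw]

theorem extendA_eq_some_mono {X Y : String → Option W} {w : W} (hlen : xs.length = ws.length)
    (hXY : x ∉ xs → X x = some w → Y x = some w) (hX : extendA X xs ws x = some w) :
    extendA Y xs ws x = some w := by
  by_cases hx : x ∈ xs
  · rwa [extendA_eq_extendA_of_mem Y X hlen hx]
  · rw [extendA_of_notMem _ hx] at hX ⊢
    exact hXY hx hX

theorem maskS_eq_some_iff {σ : SubstMap} {v : Expr} :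
    maskS σ xs x = some v ↔ x ∉ xs ∧ σ x = some v := by
  simp [maskS]

/-- The environment `A` restricted to the variables outside the domain of `σ`: the variables
that may still occur free after the substitution `σ` has been performed. -/
def VarEnv.diff (A : VarEnv) (σ : SubstMap) : VarEnv :=
  fun x => if (σ x).isSome then none else A x

theorem VarEnv.diff_eq_some_iff {A : VarEnv} {σ : SubstMap} {T : Ty} :
    A.diff σ x = some T ↔ σ x = none ∧ A x = some T := by
  simp [VarEnv.diff]

theorem VarEnv.diff_extendA_maskS (A : VarEnv) (σ : SubstMap) {Ts : List Ty}
    (hlen : xs.length = Ts.length) :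
    VarEnv.diff (extendA A xs Ts) (maskS σ xs) = extendA (A.diff σ) xs Ts := by
  funext x
  by_cases hx : x ∈ xs
  · simpa [VarEnv.diff, maskS, hx] using extendA_eq_extendA_of_mem _ _ hlen hx
  · simp [VarEnv.diff, maskS, hx, extendA_of_notMem]

end Environments

section Closedness

variable {e e' : Expr} {σ : SubstMap}

theorem IsLocalVal.closed (h : IsLocalVal e) : Closed e := by
  induction h with
  | cnst _ ih =>
    intro x hx
    cases hx with
    | cnst hmem hx => exact ih _ hmem x hx
  | builtin => rintro x ⟨⟩
  | dfun => rintro x ⟨⟩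
  | lam h => exact h

theorem Subst.freeIn (hsub : Subst σ e e') (hσ : ∀ x v, σ x = some v → Closed v) {y : String}
    (hy : FreeIn y e') : FreeIn y e := by
  induction hsub with
  | varHit hx => exact absurd hy (hσ _ _ hx y)
  | varMiss | fld | builtin | dfun => exact hy
  | cnst hlen _ ih =>
    cases hy with
    | cnst hmem hy =>
      obtain ⟨i, a, hb, ha⟩ := exists_getElem?_pair_of_mem hlen hmem
      exact .cnst (List.mem_of_getElem? ha) (ih i a _ ha hb hσ hy)
  | lam _ ih =>
    cases hy with
    | lam hmem hy => exact .lam hmem (ih (fun x v hx => hσ x v (maskS_eq_some_iff.1 hx).2) hy)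
  | app _ hlen _ ihFun ihArg =>
    cases hy with
    | appFun hy => exact .appFun (ihFun hσ hy)
    | appArg hmem hy =>
      obtain ⟨i, a, hb, ha⟩ := exists_getElem?_pair_of_mem hlen hmem
      exact .appArg (List.mem_of_getElem? ha) (ihArg i a _ ha hb hσ hy)
  | rep _ _ ihInit ihBody =>
    cases hy with
    | repInit hy => exact .repInit (ihInit hσ hy)
    | repBody hne hy =>
      exact .repBody hne (ihBody (fun x v hx => hσ x v (maskS_eq_some_iff.1 hx).2) hy)
  | nbr _ ih =>
    cases hy with
    | nbr hy => exact .nbr (ih hσ hy)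

theorem IsLocalVal.subst (h : IsLocalVal e) (hσ : ∀ x v, σ x = some v → Closed v)
    (hsub : Subst σ e e') : IsLocalVal e' := by
  induction h generalizing e' with
  | cnst _ ih =>
    cases hsub with
    | cnst hlen hargs =>
      refine .cnst fun b hb => ?_
      obtain ⟨i, a, hb, ha⟩ := exists_getElem?_pair_of_mem hlen hb
      exact ih a (List.mem_of_getElem? ha) (hargs i a b ha hb)
  | builtin => cases hsub; exact .builtin
  | dfun => cases hsub; exact .dfun
  | lam hclosed =>
    have hfree := fun y => hsub.freeIn (y := y) hσ
    cases hsub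
    exact .lam fun y hy => hclosed y (hfree y hy)

end Closedness

section Typing

variable {D D' : SchemeEnv} {A A' : VarEnv} {e e' : Expr} {T : Ty} {σ : SubstMap}

theorem HasTy.mono_of_freeIn (hty : HasTy D A e T) (hD : ∀ n s, D n = some s → D' n = some s)
    (hA : ∀ x U, FreeIn x e → A x = some U → A' x = some U) : HasTy D' A' e T := by
  induction hty generalizing A' with
  | var hx => exact .var (hA _ _ .var hx)
  | fld hS hval _ ih =>
    exact .fld hS hval fun δ ℓ hℓ => ih δ ℓ hℓ fun x U hx => hA x U (.fld hℓ hx)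
  | cnst hc hs hLs hS hval hlen _ ih =>
    exact .cnst (hD _ _ hc) hs hLs hS hval hlen fun i e L he hL =>
      ih i e L he hL fun x U hx => hA x U (.cnst (List.mem_of_getElem? he) hx)
  | builtin hb hs hL => exact .builtin (hD _ _ hb) hs hL
  | dfun hd hs hL => exact .dfun (hD _ _ hd) hs hL
  | lam hfree hR hlen _ ih =>
    refine .lam (fun y hy => ?_) hR hlen (ih fun x U hx =>
      extendA_eq_some_mono hlen fun hmem => hA x U (.lam hmem hx))
    obtain ⟨L, hAy, hL⟩ := hfree y hy
    exact ⟨L, hA y L hy hAy, hL⟩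
  | app _ hlen _ ihFun ihArg =>
    exact .app (ihFun fun x U hx => hA x U (.appFun hx)) hlen fun i e U he hU =>
      ihArg i e U he hU fun x V hx => hA x V (.appArg (List.mem_of_getElem? he) hx)
  | rep hS _ _ ihInit ihBody =>
    exact .rep hS (ihInit fun x U hx => hA x U (.repInit hx)) (ihBody fun x U hx =>
      extendA_eq_some_mono rfl fun hmem =>
        hA x U (.repBody (fun h => hmem (List.mem_singleton.2 h)) hx))
  | nbr hS _ ih => exact .nbr hS (ih fun x U hx => hA x U (.nbr hx))

theorem HasTy.of_closed (hty : HasTy D A e T) (he : Closed e) (A' : VarEnv) : HasTy D A' e T :=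
  hty.mono_of_freeIn (fun _ _ h => h) fun x _ hx => absurd hx (he x)

theorem HasTy.exists_eq_some_of_freeIn (hty : HasTy D A e T) {y : String} (hy : FreeIn y e) :
    ∃ U, A y = some U := by
  induction hty with
  | var hx => cases hy; exact ⟨_, hx⟩
  | fld _ _ _ ih =>
    cases hy with
    | fld hℓ hy => exact ih _ _ hℓ hy
  | cnst _ _ _ _ _ hlen _ ih =>
    cases hy with
    | cnst hmem hy =>
      obtain ⟨i, L, he, hL⟩ := exists_getElem?_pair_of_mem hlen hmem
      exact ih i _ L he hL hy
  | builtin | dfun => cases hy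
  | lam hfree =>
    obtain ⟨L, hL, -⟩ := hfree y hy
    exact ⟨L, hL⟩
  | app _ hlen _ ihFun ihArg =>
    cases hy with
    | appFun hy => exact ihFun hy
    | appArg hmem hy =>
      obtain ⟨i, U, he, hU⟩ := exists_getElem?_pair_of_mem hlen hmem
      exact ihArg i _ U he hU hy
  | rep _ _ _ ihInit ihBody =>
    cases hy with
    | repInit hy => exact ihInit hy
    | repBody hne hy =>
      obtain ⟨U, hU⟩ := ihBody hy
      rw [extendA_of_notMem _ (mt List.mem_singleton.1 hne)] at hU
      exact ⟨U, hU⟩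
  | nbr _ _ ih =>
    cases hy with
    | nbr hy => exact ih hy

theorem HasTy.closed (hty : HasTy D VarEnv.empty e T) : Closed e := fun _ hx =>
  have ⟨_, hU⟩ := hty.exists_eq_some_of_freeIn hx
  Option.some_ne_none _ hU.symm

/-- The substitution `σ` respects the environment `A`: every variable it replaces is assigned a
type by `A`, and the replacement has that type in the empty environment. -/
def WellTypedSubst (D : SchemeEnv) (σ : SubstMap) (A : VarEnv) : Prop :=
  ∀ x v, σ x = some v → ∃ T, A x = some T ∧ HasTy D VarEnv.empty v T

theorem WellTypedSubst.closed (hσ : WellTypedSubst D σ A) (x : String) (v : Expr)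
    (hx : σ x = some v) : Closed v :=
  have ⟨_, _, hv⟩ := hσ x v hx
  hv.closed

theorem WellTypedSubst.maskS (hσ : WellTypedSubst D σ A) (xs : List String) (Ts : List Ty) :
    WellTypedSubst D (maskS σ xs) (extendA A xs Ts) := by
  intro x v hx
  obtain ⟨hmem, hx⟩ := maskS_eq_some_iff.1 hx
  rw [extendA_of_notMem _ hmem]
  exact hσ x v hx

theorem wellTypedSubst_bindVals {vs : List Expr} {Ts : List Ty}
    (hvs : List.Forall₂ (HasTy D VarEnv.empty) vs Ts) (xs : List String) (A : VarEnv) :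
    WellTypedSubst D (bindVals xs vs) (extendA A xs Ts) := by
  intro x v hx
  have hrel := rel_lookup_zip_of_forall₂ hvs xs x
  rw [show (xs.zip vs).lookup x = some v from hx] at hrel
  generalize hT : (xs.zip Ts).lookup x = T? at hrel
  cases hrel with
  | some hv => exact ⟨_, by simp [extendA, hT], hv⟩

theorem eq_some_of_diff_extendA_bindVals {vs : List Expr} {Ts : List Ty}
    (hlen : vs.length = Ts.length) {xs : List String} {x : String} {U : Ty}
    (hx : VarEnv.diff (extendA A xs Ts) (bindVals xs vs) x = some U) : A x = some U := by
  obtain ⟨hnone, hU⟩ := VarEnv.diff_eq_some_iff.1 hx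
  have hrel := rel_lookup_zip_of_forall₂ (R := fun _ _ => True)
    (List.forall₂_iff_zip.2 ⟨hlen, fun _ => trivial⟩) xs x
  rw [show (xs.zip vs).lookup x = none from hnone] at hrel
  generalize hT : (xs.zip Ts).lookup x = T? at hrel
  cases hrel
  simpa [extendA, hT] using hU

theorem exists_isLocal_of_freeIn_subst_lam {xs : List String} {Ts : List Ty} {b b' : Expr}
    {R : Ty} (hfree : ∀ y, FreeIn y (.lam xs b) → ∃ L, A y = some L ∧ IsLocal L)
    (hσ : ∀ x v, σ x = some v → Closed v) (hsub : Subst σ (.lam xs b) (.lam xs b'))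
    (hbody : HasTy D (extendA (A.diff σ) xs Ts) b' R) {y : String} (hy : FreeIn y (.lam xs b')) :
    ∃ L, A.diff σ y = some L ∧ IsLocal L := by
  obtain ⟨L, hAy, hL⟩ := hfree y (hsub.freeIn hσ hy)
  cases hy with
  | lam hmem hy =>
    obtain ⟨U, hU⟩ := hbody.exists_eq_some_of_freeIn hy
    rw [extendA_of_notMem _ hmem] at hU
    have hnone : σ y = none := (VarEnv.diff_eq_some_iff.1 hU).1
    exact ⟨L, VarEnv.diff_eq_some_iff.2 ⟨hnone, hAy⟩, hL⟩

theorem HasTy.subst (hty : HasTy D A e T) (hσ : WellTypedSubst D σ A) (hsub : Subst σ e e') :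
    HasTy D (A.diff σ) e' T := by
  induction hty generalizing σ e' with
  | var hA =>
    cases hsub with
    | varHit hx =>
      obtain ⟨U, hU, hv⟩ := hσ _ _ hx
      obtain rfl := Option.some.inj (hU.symm.trans hA)
      exact hv.of_closed hv.closed _
    | varMiss hx => exact .var (VarEnv.diff_eq_some_iff.2 ⟨hx, hA⟩)
  | fld hS hval hℓs =>
    cases hsub
    exact .fld hS hval fun δ ℓ hℓ => (hℓs δ ℓ hℓ).of_closed (hval δ ℓ hℓ).closed _
  | @cnst _ c _ _ _ _ hc hs hLs hS hval hlen _ ih =>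
    cases hsub with
    | cnst hlen' hargs =>
      obtain ⟨hval'⟩ := (IsLocalVal.cnst hval).subst hσ.closed (.cnst (c := c) hlen' hargs)
      refine .cnst hc hs hLs hS hval' (hlen'.trans hlen) fun i b L hb hL => ?_
      obtain ⟨a, ha⟩ := exists_getElem?_eq_some_of_length_eq hlen' hb
      exact ih i a L ha hL hσ (hargs i a b ha hb)
  | builtin hb hs hL => cases hsub; exact .builtin hb hs hL
  | dfun hd hs hL => cases hsub; exact .dfun hd hs hL
  | lam hfree hR hlen _ ih =>
    cases hsub with
    | lam hsub =>
      have hbody := ih (hσ.maskS _ _) hsub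
      rw [VarEnv.diff_extendA_maskS _ _ hlen] at hbody
      exact .lam (fun y => exists_isLocal_of_freeIn_subst_lam hfree hσ.closed (.lam hsub) hbody)
        hR hlen hbody
  | app _ hlen _ ihFun ihArg =>
    cases hsub with
    | app hfun hlen' hargs =>
      refine .app (ihFun hσ hfun) (hlen'.trans hlen) fun i b U hb hU => ?_
      obtain ⟨a, ha⟩ := exists_getElem?_eq_some_of_length_eq hlen' hb
      exact ihArg i a U ha hU hσ (hargs i a b ha hb)
  | rep hS _ _ ihInit ihBody =>
    cases hsub with
    | rep hinit hsub =>
      have hbody := ihBody (hσ.maskS _ _) hsub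
      rw [VarEnv.diff_extendA_maskS _ _ rfl] at hbody
      exact .rep hS (ihInit hσ hinit) hbody
  | nbr hS _ ih =>
    cases hsub with
    | nbr hsub => exact .nbr hS (ih hσ hsub)

theorem substitution_lemma_general {xs : List String} {Ts : List Ty} {vs : List Expr}
    (hvty : List.Forall₂ (HasTy D VarEnv.empty) vs Ts)
    (hty : HasTy D (extendA A xs Ts) e T) (hsub : Subst (bindVals xs vs) e e') :
    HasTy D A e' T :=
  (hty.subst (wellTypedSubst_bindVals hvty xs A) hsub).mono_of_freeIn (fun _ _ h => h)
    fun _ _ _ => eq_some_of_diff_extendA_bindVals hvty.length_eq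

end Typing

/-- **Substitution lemma** (Lemma A.1 of the paper): if 𝒜 = x̄:T̄, the closed
values v̄ satisfy 𝒪𝒮;∅ ⊢ v̄ : T̄ and 𝒟;𝒜 ⊢ e : T, then 𝒟;∅ ⊢ e[x̄:=v̄] : T. -/
theorem substitution_lemma
    (OS D : SchemeEnv)
    -- 𝒟 extends the distinguished built-in local-type-scheme environment 𝒪𝒮
    (hOS : ∀ n s, OS n = some s → D n = some s)
    (xs : List String) (Ts : List Ty) (vs : List Expr)
    (hlen : vs.length = xs.length)
    (hval : ∀ v ∈ vs, IsVal v)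
    (hvty : List.Forall₂ (fun v T => HasTy OS VarEnv.empty v T) vs Ts)
    (e e' : Expr) (T : Ty)
    (hty : HasTy D (extendA VarEnv.empty xs Ts) e T)
    (hsub : Subst (bindVals xs vs) e e') :
    HasTy D VarEnv.empty e' T := by
  have hvty' : List.Forall₂ (HasTy D VarEnv.empty) vs Ts :=
    hvty.imp fun _ _ hv => hv.mono_of_freeIn hOS fun _ _ _ h => h
  exact substitution_lemma_general hvty' hty hsub

end HFC
end

section
/- The unit-disc neighbouring relation satisfies the three event-structure properties: with neigh defined as in the unit-disc communication model, (1) neigh(ε,ε') implies t(ε') < t(ε), so the graph induced by neigh has no cycles; (2) if neigh(ε,ε₁), neigh(ε,ε₂) and dev(ε₁) = dev(ε₂), then ε₁ = ε₂ (every event linked from ε has a different device label); (3) if neigh(ε₀,ε'), neigh(ε₁,ε') and dev(ε₀) = dev(ε₁) = dev(ε'), then ε₀ = ε₁ (every event is linked from at most one event with the same device label). -/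
namespace UnitDisc

/-- Conditions (1)–(3) of the unit-disc communication model (Example 4.1):
`cond123 dev t near P Δ ε ε'` holds when (1) ε' happened in the time interval
of size Δ before ε; (2) the device of ε was constantly turned on between ε'
and ε; and (3) the two devices were neighbours when ε' happened. -/
def cond123 {E Pos : Type*} (dev : E → ℕ) (t : E → ℝ)
    (near : Pos → Pos → Prop) (P : ℕ → ℝ → Option Pos) (Δ : ℝ)
    (ε ε' : E) : Prop :=
  t ε' ∈ Set.Ico (t ε - Δ) (t ε) ∧
  (∀ s ∈ Set.Icc (t ε') (t ε), (P (dev ε) s).isSome) ∧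
  (∃ p p', P (dev ε) (t ε') = some p ∧ P (dev ε') (t ε') = some p' ∧ near p p')

/-- The neighbouring relation of the unit-disc communication model:
`neigh ε ε'` holds iff ε' satisfies conditions (1)–(3) with respect to ε and
(4) ε' is the last firing of its device satisfying them. -/
def udNeigh {E Pos : Type*} (dev : E → ℕ) (t : E → ℝ)
    (near : Pos → Pos → Prop) (P : ℕ → ℝ → Option Pos) (Δ : ℝ)
    (ε ε' : E) : Prop :=
  cond123 dev t near P Δ ε ε' ∧
  ¬ ∃ ε'', dev ε'' = dev ε' ∧ t ε' < t ε'' ∧ cond123 dev t near P Δ ε ε''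

/-!
Links go strictly backwards in time, so a cycle would make an event earlier than itself. Condition
(4) makes a neighbour the latest event of its device satisfying (1)–(3), and distinct events have
distinct times, so there is at most one neighbour per device. If `ε₀` and `ε₁` both link to `ε'` on
the same device and `ε₀` comes before `ε₁`, then `ε₀` lies strictly between `ε'` and `ε₁`. The
device is on throughout that interval, so by reflexivity of `near` the event `ε₀` satisfies (1)–(3)
with respect to `ε₁`, contradicting the maximality of `ε'`.
-/

theorem not_transGen_self_of_forall_lt {α β : Type*} [Preorder β] {r : α → α → Prop} {f : α → β}
    (hf : ∀ a b, r a b → f b < f a) (a : α) : ¬ Relation.TransGen r a a := by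
  intro hcycle
  have hdecr : Relation.TransGen (· > ·) (f a) (f a) := hcycle.lift f hf
  rw [Relation.transGen_eq_self] at hdecr
  exact lt_irrefl _ hdecr

section

variable {E Pos : Type*} {dev : E → ℕ} {t : E → ℝ} {near : Pos → Pos → Prop}
  {P : ℕ → ℝ → Option Pos} {Δ : ℝ} {ε ε' ε'' ε₀ ε₁ ε₂ : E}

theorem cond123.of_dev_eq_of_time_le (hrefl : ∀ p, near p p)
    (h : cond123 dev t near P Δ ε ε') (hdev : dev ε'' = dev ε)
    (hle : t ε' ≤ t ε'') (hlt : t ε'' < t ε) : cond123 dev t near P Δ ε ε'' := by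
  obtain ⟨⟨hwindow, -⟩, hon, -⟩ := h
  obtain ⟨p, hp⟩ := Option.isSome_iff_exists.mp (hon (t ε'') ⟨hle, hlt.le⟩)
  exact ⟨⟨hwindow.trans hle, hlt⟩, fun s hs ↦ hon s ⟨hle.trans hs.1, hs.2⟩,
    p, p, hp, hdev ▸ hp, hrefl p⟩

theorem udNeigh.time_lt (h : udNeigh dev t near P Δ ε ε') : t ε' < t ε :=
  h.1.1.2

theorem udNeigh.time_le_of_cond123 (h : udNeigh dev t near P Δ ε ε')
    (hdev : dev ε'' = dev ε') (h' : cond123 dev t near P Δ ε ε'') : t ε'' ≤ t ε' :=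
  not_lt.mp fun hlt ↦ h.2 ⟨ε'', hdev, hlt, h'⟩

theorem udNeigh.eq_of_dev_eq (ht : Function.Injective t) (h₁ : udNeigh dev t near P Δ ε ε₁)
    (h₂ : udNeigh dev t near P Δ ε ε₂) (hdev : dev ε₁ = dev ε₂) : ε₁ = ε₂ :=
  ht <| le_antisymm (h₂.time_le_of_cond123 hdev h₁.1) (h₁.time_le_of_cond123 hdev.symm h₂.1)

theorem udNeigh.time_le_of_time_lt (hrefl : ∀ p, near p p) (h : udNeigh dev t near P Δ ε ε')
    (hdev : dev ε = dev ε') (hdev' : dev ε'' = dev ε') (hlt : t ε'' < t ε) : t ε'' ≤ t ε' := by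
  by_contra! hbetween
  have hcond : cond123 dev t near P Δ ε ε'' :=
    h.1.of_dev_eq_of_time_le hrefl (hdev'.trans hdev.symm) hbetween.le hlt
  exact hbetween.not_ge (h.time_le_of_cond123 hdev' hcond)

theorem udNeigh.time_le_of_common_neigh (hrefl : ∀ p, near p p)
    (h₀ : udNeigh dev t near P Δ ε₀ ε') (h₁ : udNeigh dev t near P Δ ε₁ ε')
    (hdev₀ : dev ε₀ = dev ε') (hdev₁ : dev ε₁ = dev ε') : t ε₁ ≤ t ε₀ :=
  not_lt.mp fun hlt ↦ h₀.time_lt.not_ge (h₁.time_le_of_time_lt hrefl hdev₁ hdev₀ hlt)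

theorem udNeigh.eq_of_common_neigh (ht : Function.Injective t) (hrefl : ∀ p, near p p)
    (h₀ : udNeigh dev t near P Δ ε₀ ε') (h₁ : udNeigh dev t near P Δ ε₁ ε')
    (hdev₀ : dev ε₀ = dev ε') (hdev₁ : dev ε₁ = dev ε') : ε₀ = ε₁ :=
  ht <| le_antisymm (h₁.time_le_of_common_neigh hrefl h₀ hdev₁ hdev₀)
    (h₀.time_le_of_common_neigh hrefl h₁ hdev₀ hdev₁)

end

theorem unit_disc_event_structure_properties_general
    {E Pos : Type*} (dev : E → ℕ) (t : E → ℝ)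
    (ht : Function.Injective t)
    (near : Pos → Pos → Prop)
    (hrefl : ∀ p, near p p)
    (P : ℕ → ℝ → Option Pos) (Δ : ℝ) :
    (∀ ε ε', udNeigh dev t near P Δ ε ε' → t ε' < t ε) ∧
    (∀ ε, ¬ Relation.TransGen (udNeigh dev t near P Δ) ε ε) ∧
    (∀ ε ε₁ ε₂, udNeigh dev t near P Δ ε ε₁ → udNeigh dev t near P Δ ε ε₂ →
      dev ε₁ = dev ε₂ → ε₁ = ε₂) ∧
    (∀ ε₀ ε₁ ε', udNeigh dev t near P Δ ε₀ ε' → udNeigh dev t near P Δ ε₁ ε' →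
      dev ε₀ = dev ε' → dev ε₁ = dev ε' → ε₀ = ε₁) :=
  ⟨fun _ _ ↦ udNeigh.time_lt,
    not_transGen_self_of_forall_lt fun _ _ ↦ udNeigh.time_lt,
    fun _ _ _ ↦ udNeigh.eq_of_dev_eq ht,
    fun _ _ _ ↦ udNeigh.eq_of_common_neigh ht hrefl⟩

/-- **The unit-disc neighbouring relation satisfies the three event-structure
properties**: (1) it is time-decreasing, hence its induced graph has no
cycles; (2) the neighbours of an event have pairwise distinct device labels;
(3) every event is linked from at most one event with the same device
label. -/
theorem unit_disc_event_structure_properties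
    {E Pos : Type*} (dev : E → ℕ) (t : E → ℝ)
    (ht : Function.Injective t)
    (near : Pos → Pos → Prop)
    (hrefl : ∀ p, near p p) (hsymm : ∀ p q, near p q → near q p)
    (P : ℕ → ℝ → Option Pos) (Δ : ℝ) (hΔ : 0 < Δ) :
    (∀ ε ε', udNeigh dev t near P Δ ε ε' → t ε' < t ε) ∧
    (∀ ε, ¬ Relation.TransGen (udNeigh dev t near P Δ) ε ε) ∧
    (∀ ε ε₁ ε₂, udNeigh dev t near P Δ ε ε₁ → udNeigh dev t near P Δ ε ε₂ →
      dev ε₁ = dev ε₂ → ε₁ = ε₂) ∧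
    (∀ ε₀ ε₁ ε', udNeigh dev t near P Δ ε₀ ε' → udNeigh dev t near P Δ ε₁ ε' →
      dev ε₀ = dev ε' → dev ε₁ = dev ε' → ε₀ = ε₁) :=
  unit_disc_event_structure_properties_general dev t ht near hrefl P Δ

end UnitDisc
end

section
/- Stabilisation of causal iteration on a finite event DAG: Let E be a finite type, R : E → E → Prop a well-founded relation (R ε' ε read 'ε' is a causal predecessor of ε'), V a type, f₀ : E → V, and h : E → (E → V) → V such that h ε f = h ε g whenever f and g agree on all ε' with R ε' ε. Define f : ℕ → E → V by f 0 = f₀ and f (n+1) ε = h ε (f n). Then f n = f (card E) for all n ≥ card E, where card E is the cardinality of E. -/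
/-!
The value at an event `ε` is final as soon as the number of iterations exceeds the rank of `ε`, that
is, the height of its causal past: the predecessors of `ε` have smaller rank, so their values were
already final one iteration earlier. The ranks form an initial segment of the ordinals, so on a
finite type with `N` elements there are at most `N` of them and each is less than `N`.
-/

theorem acc_rank_lt_card {α : Type*} [Fintype α] {r : α → α → Prop} {a : α} (ha : Acc r a) :
    ha.rank < Fintype.card α := by
  by_contra! hcard
  have exists_rank_eq (i : Fin (Fintype.card α + 1)) : ∃ b, ∃ hb : Acc r b, hb.rank = (i : ℕ) :=
    ha.mem_range_rank_of_le ((Nat.cast_le.2 i.is_le).trans hcard)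
  choose b hb hrank using exists_rank_eq
  have b_injective : Function.Injective b := fun i j hij =>
    Fin.ext <| Nat.cast_injective (R := Ordinal) <| by
      rw [← hrank i, ← hrank j]
      congr
  have card_succ_le : Fintype.card α + 1 ≤ Fintype.card α := by
    simpa only [Fintype.card_fin] using Fintype.card_le_of_injective b b_injective
  exact Nat.not_succ_le_self _ card_succ_le

theorem causal_iteration_stabilises_general {E : Type*} {V : E → Type*} {R : E → E → Prop}
    {h : ∀ ε, (∀ ε', V ε') → V ε} (hloc : ∀ ε, DependsOn (h ε) {ε' | R ε' ε})
    {f : ℕ → ∀ ε, V ε} (hfs : ∀ n, f (n + 1) = fun ε => h ε (f n))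
    {ε : E} (hε : Acc R ε) {m n : ℕ} (hm : hε.rank < m) (hn : hε.rank < n) :
    f m ε = f n ε := by
  induction m generalizing ε n with
  | zero => simp at hm
  | succ m ih =>
    cases n with
    | zero => simp at hn
    | succ n =>
      have rank_pred_lt {ε' : E} (hR : R ε' ε) {k : ℕ} (hk : hε.rank < (k + 1 : ℕ)) :
          (hε.inv hR).rank < k :=
        (hε.rank_lt_of_rel hR).trans_le (Order.lt_succ_iff.1 (by simpa using hk))
      have agree_on_preds : ∀ ε' ∈ {ε' | R ε' ε}, f m ε' = f n ε' := fun ε' hR =>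
        ih (hε.inv hR) (rank_pred_lt hR hm) (rank_pred_lt hR hn)
      simpa only [hfs] using hloc ε agree_on_preds

/-- **Stabilisation of causal iteration on a finite event DAG**: let `E` be a
finite type, `R` a well-founded causal-predecessor relation, `f₀ : E → V` an
initial assignment and `h` an update function whose value at `ε` depends only
on the values at the causal predecessors of `ε`.  Then the iteration
`f 0 = f₀`, `f (n+1) ε = h ε (f n)` stabilises after at most `card E` steps:
`f n = f (card E)` for all `n ≥ card E`. -/
theorem causal_iteration_stabilises {E : Type*} [Fintype E] {V : Type*}
    (R : E → E → Prop) (hwf : WellFounded R)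
    (f₀ : E → V) (h : E → (E → V) → V)
    (hloc : ∀ ε (f g : E → V), (∀ ε', R ε' ε → f ε' = g ε') → h ε f = h ε g)
    (f : ℕ → E → V)
    (hf0 : f 0 = f₀) (hfs : ∀ n, f (n + 1) = fun ε => h ε (f n)) :
    ∀ n, Fintype.card E ≤ n → f n = f (Fintype.card E) := by
  exact fun n hn => funext fun ε => causal_iteration_stabilises_general hloc hfs (hwf.apply ε)
    ((acc_rank_lt_card _).trans_le (Nat.cast_le.2 hn)) (acc_rank_lt_card _)
end
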